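/- Consider the 1-D heat equation ∂_t u = ε_n ∂²_{xx} u with viscosity ε_n = 2^{-2n} and initial data u₀(x) = 2^{-ns} φ(x) cos((17/12)2^n x), where φ is a Schwartz bump whose Fourier transform is supported in {|ξ| ≤ 1/2} and equal to 1 near 0, and s > 3/2 (or any fixed s ∈ ℝ with p ∈ [1,∞]). Then the solution u^{ε_n}(t) = e^{ε_n t ∂²_{xx}} u₀ satisfies: at times t = δ 2^{... } comparable to a fixed small δ > 0, 2^{ns}‖Δ_n(u^{ε_n}(t) − u₀)‖_{L^p} ≥ c₁ t − C₁ t², with c₁, C₁ > 0 independent of n; hence u^{ε_n}(t) − u₀ does not converge to 0 in B^s_{p,∞}(ℝ) as n → ∞ for t in a fixed small interval bounded away from values where c₁t − C₁t² ≤ 0. -/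

import Mathlib

open MeasureTheory Filter

/-- Fourier transform on `ℝ` with the convention `(Fu)(ξ) = ∫ e^{-i x ξ} u(x) dx`. -/
noncomputable def fourierT1 (u : ℝ → ℂ) (ξ : ℝ) : ℂ :=
  ∫ x : ℝ, Complex.exp (-Complex.I * (x * ξ)) * u x

/-- Inverse Fourier transform on `ℝ`: `(F⁻¹u)(x) = (2π)⁻¹ ∫ e^{i x ξ} u(ξ) dξ`. -/
noncomputable def invFourierT1 (u : ℝ → ℂ) (x : ℝ) : ℂ :=
  ((2 * Real.pi : ℝ) : ℂ)⁻¹ * ∫ ξ : ℝ, Complex.exp (Complex.I * (x * ξ)) * u ξ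

/-- The Littlewood–Paley cutoff `φ(ξ) = ϑ(ξ/2) − ϑ(ξ)`. -/
noncomputable def lpCutoff1 (ϑ : ℝ → ℝ) (ξ : ℝ) : ℝ := ϑ (ξ / 2) - ϑ ξ

/-- The nonhomogeneous Littlewood–Paley block `Δ_n` on `ℝ`, for `n ≥ -1`. -/
noncomputable def lpBlock1 (ϑ : ℝ → ℝ) (n : ℤ) (g : ℝ → ℂ) (x : ℝ) : ℂ :=
  invFourierT1 (fun ξ =>
    ((if n = -1 then ϑ ξ else lpCutoff1 ϑ ((2:ℝ)^(-n) * ξ)) : ℝ) * fourierT1 g ξ) x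

/-- The 1-D heat semigroup `e^{t∂²ₓₓ}`. -/
noncomputable def heatSemigroup1 (t : ℝ) (f : ℝ → ℂ) (x : ℝ) : ℂ :=
  if t ≤ 0 then f x
  else ∫ y : ℝ, (((4 * Real.pi * t) ^ (-(1:ℝ)/2) * Real.exp (-(x - y)^2 / (4*t)) : ℝ) : ℂ) * f y

lemma aux_exp_norm (x ξ : ℝ) : ‖Complex.exp (-Complex.I * (x * ξ))‖ = 1 := by
  have : -Complex.I * ((x:ℂ) * ξ) = ((-(x * ξ) : ℝ) : ℂ) * Complex.I := by push_cast; ring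
  rw [this, Complex.norm_exp_ofReal_mul_I]

lemma aux_exp_norm' (x ξ : ℝ) : ‖Complex.exp (Complex.I * (x * ξ))‖ = 1 := by
  have : Complex.I * ((x:ℂ) * ξ) = (((x * ξ) : ℝ) : ℂ) * Complex.I := by push_cast; ring
  rw [this, Complex.norm_exp_ofReal_mul_I]

lemma aux_int_exp {f : ℝ → ℂ} (hf : Integrable f) (ξ : ℝ) :
    Integrable (fun x : ℝ => Complex.exp (-Complex.I * (x * ξ)) * f x) := by
  refine hf.bdd_mul (c := 1) ?_ (Filter.Eventually.of_forall fun x => (aux_exp_norm x ξ).le)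
  exact (by fun_prop : Continuous fun x : ℝ => Complex.exp (-Complex.I * (x * ξ))).aestronglyMeasurable

lemma aux_int_exp' {f : ℝ → ℂ} (hf : Integrable f) (x : ℝ) :
    Integrable (fun ξ : ℝ => Complex.exp (Complex.I * (x * ξ)) * f ξ) := by
  refine hf.bdd_mul (c := 1) ?_ (Filter.Eventually.of_forall fun ξ => (aux_exp_norm' x ξ).le)
  exact (by fun_prop : Continuous fun ξ : ℝ => Complex.exp (Complex.I * (x * ξ))).aestronglyMeasurable

lemma aux_kernel_ft (τ : ℝ) (hτ : 0 < τ) (ξ : ℝ) :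
    ∫ x : ℝ, Complex.exp (-Complex.I * (x * ξ)) *
      (((4 * Real.pi * τ) ^ (-(1:ℝ)/2) * Real.exp (-x^2 / (4*τ)) : ℝ) : ℂ)
      = Complex.exp (-(τ * ξ^2)) := by
  have hb : 0 < ((((4*τ)⁻¹ : ℝ)) : ℂ).re := by
    rw [Complex.ofReal_re]; positivity
  have h := fourierIntegral_gaussian hb (-(ξ:ℂ))
  have h1 : ∀ x : ℝ, Complex.exp (-Complex.I * (x * ξ)) *
      (((4 * Real.pi * τ) ^ (-(1:ℝ)/2) * Real.exp (-x^2 / (4*τ)) : ℝ) : ℂ)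
      = (((4 * Real.pi * τ) ^ (-(1:ℝ)/2) : ℝ) : ℂ) * (Complex.exp (Complex.I * (-(ξ:ℂ)) * x) *
        Complex.exp (-((((4*τ)⁻¹ : ℝ)) : ℂ) * x^2)) := by
    intro x
    push_cast
    rw [show -Complex.I * ((x:ℂ) * ξ) = Complex.I * (-(ξ:ℂ)) * x by ring,
      show -(x:ℂ)^2 / (4 * τ) = -((4 * (τ:ℂ))⁻¹) * x^2 by ring]
    ring
  simp_rw [h1]
  rw [integral_const_mul, h]
  have h2 : ((Real.pi : ℂ) / (((4*τ)⁻¹ : ℝ) : ℂ)) ^ (1/2 : ℂ)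
      = (((4 * Real.pi * τ) ^ ((1:ℝ)/2) : ℝ) : ℂ) := by
    rw [Complex.ofReal_cpow (by positivity)]
    push_cast
    congr 1
    rw [div_inv_eq_mul]; ring
  rw [h2, ← mul_assoc, ← Complex.ofReal_mul, ← Real.rpow_add (by positivity)]
  have h3 : -(1:ℝ)/2 + 1/2 = 0 := by norm_num
  rw [h3, Real.rpow_zero, Complex.ofReal_one, one_mul]
  congr 1
  have : (τ:ℂ) ≠ 0 := by exact_mod_cast hτ.ne'
  push_cast
  field_simp

lemma aux_kernel_int (τ : ℝ) (hτ : 0 < τ) :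
    Integrable (fun x : ℝ =>
      (((4 * Real.pi * τ) ^ (-(1:ℝ)/2) * Real.exp (-x^2 / (4*τ)) : ℝ) : ℂ)) := by
  apply Integrable.ofReal
  apply Integrable.const_mul
  have := integrable_exp_neg_mul_sq (b := (4*τ)⁻¹) (by positivity)
  refine this.congr (Filter.Eventually.of_forall fun x => ?_)
  simp only
  congr 1
  ring

lemma aux_heat (τ : ℝ) (hτ : 0 < τ) (f : ℝ → ℂ) (hf : Integrable f) :
    Integrable (heatSemigroup1 τ f) ∧ ∀ ξ : ℝ,
      fourierT1 (heatSemigroup1 τ f) ξ = Complex.exp (-(τ * ξ^2)) * fourierT1 f ξ := by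
  have hk := aux_kernel_int τ hτ
  have hfun : heatSemigroup1 τ f = fun x => convolution (fun x : ℝ =>
      (((4 * Real.pi * τ) ^ (-(1:ℝ)/2) * Real.exp (-x^2 / (4*τ)) : ℝ) : ℂ)) f
      (ContinuousLinearMap.mul ℂ ℂ) volume x := by
    funext x
    rw [convolution_mul_swap, heatSemigroup1, if_neg (not_le.mpr hτ)]
  constructor
  · rw [hfun]
    exact hk.integrable_convolution _ hf
  · intro ξ
    have h1 : ∀ x : ℝ, Complex.exp (-Complex.I * (x * ξ)) * heatSemigroup1 τ f x =
        convolution (fun x : ℝ => Complex.exp (-Complex.I * (x * ξ)) *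
      (((4 * Real.pi * τ) ^ (-(1:ℝ)/2) * Real.exp (-x^2 / (4*τ)) : ℝ) : ℂ))
        (fun x : ℝ => Complex.exp (-Complex.I * (x * ξ)) * f x)
        (ContinuousLinearMap.mul ℂ ℂ) volume x := by
      intro x
      rw [convolution_mul_swap, heatSemigroup1, if_neg (not_le.mpr hτ), ← integral_const_mul]
      congr 1
      funext y
      have : Complex.exp (-Complex.I * (x * ξ)) = Complex.exp (-Complex.I * (((x - y : ℝ) : ℂ) * ξ))
          * Complex.exp (-Complex.I * (y * ξ)) := by
        rw [← Complex.exp_add]; congr 1; push_cast; ring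
      rw [this]; ring
    rw [fourierT1]
    simp_rw [h1]
    rw [integral_convolution _ (aux_int_exp hk ξ) (aux_int_exp hf ξ), aux_kernel_ft τ hτ]
    rfl

lemma aux_mod_int (φ : ℝ → ℂ) (hφ : Integrable φ) (a : ℂ) (lam : ℝ) :
    Integrable (fun x : ℝ => a * φ x * Complex.cos ((lam:ℂ) * x)) := by
  have h := (hφ.const_mul a)
  refine h.mul_bdd (c := 1) ?_ (Filter.Eventually.of_forall fun x => ?_)
  · exact (by fun_prop : Continuous fun x : ℝ => Complex.cos ((lam:ℂ) * x)).aestronglyMeasurable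
  · rw [← Complex.ofReal_mul, ← Complex.ofReal_cos, Complex.norm_real]
    exact Real.abs_cos_le_one _

lemma aux_mod_ft (φ : ℝ → ℂ) (hφ : Integrable φ) (a : ℂ) (lam ξ : ℝ) :
    fourierT1 (fun x : ℝ => a * φ x * Complex.cos ((lam:ℂ) * x)) ξ
      = a * (1/2 * (fourierT1 φ (ξ - lam) + fourierT1 φ (ξ + lam))) := by
  unfold fourierT1
  rw [← integral_add (aux_int_exp hφ _) (aux_int_exp hφ _), ← integral_const_mul,
    ← integral_const_mul]
  congr 1
  funext x
  have e1 : Complex.exp (-Complex.I * (x * ((ξ - lam : ℝ) : ℂ)))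
      = Complex.exp (-Complex.I * (x * ξ)) * Complex.exp (lam * x * Complex.I) := by
    rw [← Complex.exp_add]; congr 1; push_cast; ring
  have e2 : Complex.exp (-Complex.I * (x * ((ξ + lam : ℝ) : ℂ)))
      = Complex.exp (-Complex.I * (x * ξ)) * Complex.exp (-(lam * x) * Complex.I) := by
    rw [← Complex.exp_add]; congr 1; push_cast; ring
  have hcos : Complex.cos ((lam:ℂ) * x) = (Complex.exp (lam * x * Complex.I)
    + Complex.exp (-(lam * x) * Complex.I)) / 2 := rfl
  simp only []
  rw [e1, e2, hcos]
  ring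

lemma aux_inversion (φ : ℝ → ℂ) (hc : Continuous φ) (hi : Integrable φ) (g : ℝ → ℂ)
    (hg : Integrable g) (h : ∀ ξ, fourierT1 φ ξ = g ξ) (x : ℝ) : invFourierT1 g x = φ x := by
  have h1 : FourierTransform.fourier φ = fun w : ℝ => g (2 * Real.pi * w) := by
    funext w
    rw [Real.fourier_real_eq_integral_exp_smul, ← h, fourierT1]
    congr 1
    funext v
    rw [smul_eq_mul]
    congr 2
    push_cast
    ring
  have hpi : (2 * Real.pi) ≠ 0 := by positivity
  have h2 : Integrable (FourierTransform.fourier φ) := by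
    rw [h1]; exact hg.comp_mul_left' hpi
  have h3 := congrFun (hc.fourierInv_fourier_eq hi h2) x
  rw [← h3, h1, Real.fourierInv_eq', invFourierT1]
  have h4 := Measure.integral_comp_mul_left
    (fun ξ : ℝ => Complex.exp (Complex.I * (x * ξ)) * g ξ) (2 * Real.pi)
  have h5 : ∀ v : ℝ, Complex.exp (((2 * Real.pi * inner ℝ v x : ℝ) : ℂ) * Complex.I) •
      g (2 * Real.pi * v) = Complex.exp (Complex.I * (x * ((2 * Real.pi * v : ℝ) : ℂ))) *
        g (2 * Real.pi * v) := by
    intro v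
    rw [smul_eq_mul]
    congr 2
    simp
    ring
  simp_rw [h5]
  rw [h4, abs_of_pos (by positivity), Complex.real_smul, Complex.ofReal_inv]

lemma aux_mod_inv (φ : ℝ → ℂ) (g : ℝ → ℂ)
    (hg : Integrable g) (x lam : ℝ) (h : invFourierT1 g x = φ x) :
    invFourierT1 (fun ξ => 1/2 * (g (ξ - lam) + g (ξ + lam))) x
      = φ x * Complex.cos ((lam:ℂ) * x) := by
  rw [← h]
  have hcos : Complex.cos ((lam:ℂ) * x) = (Complex.exp (lam * x * Complex.I)
    + Complex.exp (-(lam * x) * Complex.I)) / 2 := rfl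
  unfold invFourierT1
  have s1 := integral_sub_right_eq_self (μ := volume)
    (fun ξ : ℝ => Complex.exp (Complex.I * (x * ((ξ + lam : ℝ) : ℂ))) * g ξ) lam
  have s2 := integral_add_right_eq_self (μ := volume)
    (fun ξ : ℝ => Complex.exp (Complex.I * (x * ((ξ - lam : ℝ) : ℂ))) * g ξ) lam
  simp only [sub_add_cancel, add_sub_cancel_right] at s1 s2
  have i1 := aux_int_exp' (hg.comp_sub_right lam) x
  have i2 := aux_int_exp' (hg.comp_add_right lam) x
  have e : ∀ ξ : ℝ, Complex.exp (Complex.I * (x * ξ)) * (1/2 * (g (ξ - lam) + g (ξ + lam)))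
     = 1/2 * (Complex.exp (Complex.I * (x * ξ)) * g (ξ - lam)
        + Complex.exp (Complex.I * (x * ξ)) * g (ξ + lam)) := by intro ξ; ring
  simp_rw [e]
  rw [integral_const_mul, integral_add i1 i2, s1, s2, hcos]
  have e1 : ∀ ξ : ℝ, Complex.exp (Complex.I * (x * ((ξ + lam : ℝ) : ℂ))) * g ξ
      = Complex.exp (lam * x * Complex.I) * (Complex.exp (Complex.I * (x * ξ)) * g ξ) := by
    intro ξ
    rw [← mul_assoc (Complex.exp _) (Complex.exp _), ← Complex.exp_add]; congr 2; push_cast; ring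
  have e2 : ∀ ξ : ℝ, Complex.exp (Complex.I * (x * ((ξ - lam : ℝ) : ℂ))) * g ξ
      = Complex.exp (-(lam * x) * Complex.I) * (Complex.exp (Complex.I * (x * ξ)) * g ξ) := by
    intro ξ
    rw [← mul_assoc (Complex.exp _) (Complex.exp _), ← Complex.exp_add]; congr 2; push_cast; ring
  simp_rw [e1, e2]
  rw [integral_const_mul, integral_const_mul]
  ring

lemma aux_symbol (t q η : ℝ) (ht : 0 < t) (hq : 0 < q) (hq1 : q ≤ 1/8)
    (h : |(|η| - 17/12)| ≤ q / 2) :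
    |Real.exp (-(t * η^2)) - 1 + t * (17/12)^2| ≤ 2 * t * q + 8 * t^2 := by
  obtain ⟨h1, h2⟩ := abs_le.mp h
  have hsq : η^2 = |η|^2 := (sq_abs η).symm
  rw [hsq]
  set z := |η| with hz
  have hz0 : 0 ≤ z := abs_nonneg η
  have hz2 : z ≤ 2 := by linarith
  have hy : 0 ≤ t * z^2 := by positivity
  have e1 : 1 - t * z^2 ≤ Real.exp (-(t * z^2)) := by
    have := Real.add_one_le_exp (-(t * z^2)); linarith
  have e2 : Real.exp (-(t * z^2)) ≤ 1 - t * z^2 + (t * z^2)^2 / 2 := by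
    have h3 := Real.quadratic_le_exp_of_nonneg hy
    rw [Real.exp_neg, inv_le_iff_one_le_mul₀ (Real.exp_pos _)]
    have hP : 0 ≤ 1 - t * z^2 + (t * z^2)^2 / 2 := by nlinarith [sq_nonneg (t * z^2 - 1)]
    refine le_trans ?_ (mul_le_mul_of_nonneg_left h3 hP)
    nlinarith [sq_nonneg ((t * z^2)^2)]
  have e3 : (t * z^2)^2 ≤ 16 * t^2 := by
    have : z^2 ≤ 4 := by nlinarith
    have : (z^2)^2 ≤ 16 := by nlinarith [sq_nonneg z]
    nlinarith [sq_nonneg t]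
  have e4 : |z^2 - (17/12)^2| ≤ 2 * q := by
    rw [abs_le]; constructor <;> nlinarith
  obtain ⟨e5, e6⟩ := abs_le.mp e4
  rw [abs_le]
  constructor <;> nlinarith

lemma aux_cutoff (ϑ : ℝ → ℝ) (hϑone : ∀ ξ : ℝ, |ξ| ≤ 3/4 → ϑ ξ = 1)
    (hϑzero : ∀ ξ : ℝ, 4/3 ≤ |ξ| → ϑ ξ = 0) (η : ℝ) (h : |(|η| - 17/12)| ≤ 1/12) :
    lpCutoff1 ϑ η = 1 := by
  obtain ⟨h1, h2⟩ := abs_le.mp h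
  rw [lpCutoff1, hϑzero η (by linarith), hϑone (η/2) (by rw [abs_div]; norm_num; linarith)]
  norm_num

lemma aux_inv_cont (F : ℝ → ℂ) (hF : Integrable F) : Continuous (invFourierT1 F) := by
  unfold invFourierT1
  refine continuous_const.mul ?_
  refine continuous_of_dominated (bound := fun ξ => ‖F ξ‖) ?_ ?_ hF.norm ?_
  · intro x; exact (aux_int_exp' hF x).aestronglyMeasurable
  · intro x; filter_upwards with ξ
    rw [norm_mul, aux_exp_norm', one_mul]
  · filter_upwards with ξ
    fun_prop

lemma aux_inv_norm (F : ℝ → ℂ) (x : ℝ) :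
    ‖invFourierT1 F x‖ ≤ (2 * Real.pi)⁻¹ * ∫ ξ, ‖F ξ‖ := by
  unfold invFourierT1
  rw [norm_mul, norm_inv, Complex.norm_real, Real.norm_of_nonneg (by positivity)]
  gcongr
  refine (norm_integral_le_integral_norm _).trans (le_of_eq ?_)
  congr 1; funext ξ
  rw [norm_mul, aux_exp_norm', one_mul]

lemma aux_cos_sq (lam x0 r : ℝ) (hl : 0 < lam) :
    r - 1 / lam ≤ ∫ x in (x0 - r)..(x0 + r), Real.cos (lam * x)^2 := by
  rw [intervalIntegral.integral_comp_mul_left (fun x => Real.cos x ^ 2) hl.ne', integral_cos_sq,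
    smul_eq_mul]
  set a := lam * (x0 - r) with ha
  set b := lam * (x0 + r) with hb
  have h1 : -1 ≤ Real.cos b * Real.sin b := by
    nlinarith [Real.sin_sq_add_cos_sq b, sq_nonneg (Real.cos b + Real.sin b)]
  have h2 : Real.cos a * Real.sin a ≤ 1 := by
    nlinarith [Real.sin_sq_add_cos_sq a, sq_nonneg (Real.cos a - Real.sin a)]
  have h3 : b - a = 2 * r * lam := by rw [ha, hb]; ring
  have h4 : r - 1 / lam = lam⁻¹ * (lam * r - 1) := by field_simp
  rw [h4]
  gcongr
  linarith

lemma aux_lower (G : ℝ → ℂ) (hG : Continuous G) (p : ENNReal) (hp : 1 ≤ p)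
    (A B lam x0 r : ℝ) (hA : 0 ≤ A) (hl : 0 < lam) (hr : 0 < r) (hr2 : r ≤ 1/2)
    (h : ∀ x ∈ Set.Icc (x0 - r) (x0 + r), A * Real.cos (lam * x)^2 - B ≤ ‖G x‖) :
    ENNReal.ofReal (A * (r - 1/lam) - 2 * r * B) ≤ eLpNorm G p volume := by
  have hle : x0 - r ≤ x0 + r := by linarith
  have hGi : IntegrableOn G (Set.Ioc (x0 - r) (x0 + r)) volume :=
    (hG.intervalIntegrable _ _).1
  have step1 : A * (r - 1/lam) - 2 * r * B ≤ ∫ x in (x0 - r)..(x0 + r), ‖G x‖ := by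
    have h1 : ∫ x in (x0 - r)..(x0 + r), (A * Real.cos (lam * x)^2 - B)
        ≤ ∫ x in (x0 - r)..(x0 + r), ‖G x‖ := by
      apply intervalIntegral.integral_mono_on hle
      · exact Continuous.intervalIntegrable (by fun_prop) _ _
      · exact Continuous.intervalIntegrable (by fun_prop) _ _
      · exact h
    refine le_trans ?_ h1
    rw [intervalIntegral.integral_sub (Continuous.intervalIntegrable (by fun_prop) _ _)
      (Continuous.intervalIntegrable (by fun_prop) _ _), intervalIntegral.integral_const_mul,
      intervalIntegral.integral_const, smul_eq_mul]
    have := mul_le_mul_of_nonneg_left (aux_cos_sq lam x0 r hl) hA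
    linarith
  rw [intervalIntegral.integral_of_le hle] at step1
  refine (ENNReal.ofReal_le_ofReal step1).trans ?_
  rw [ofReal_integral_norm_eq_lintegral_enorm hGi, ← eLpNorm_one_eq_lintegral_enorm]
  refine (eLpNorm_le_eLpNorm_mul_rpow_measure_univ hp hGi.aestronglyMeasurable).trans ?_
  have hm : (volume.restrict (Set.Ioc (x0 - r) (x0 + r))) Set.univ ≤ 1 := by
    rw [Measure.restrict_apply_univ, Real.volume_Ioc]
    rw [ENNReal.ofReal_le_one]; linarith
  have hexp : 0 ≤ 1 / (1:ENNReal).toReal - 1 / p.toReal := by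
    rw [ENNReal.toReal_one, sub_nonneg, div_one]
    by_cases hpt : p = ⊤
    · simp [hpt]
    · have : 1 ≤ p.toReal := by
        rw [← ENNReal.toReal_one]; exact ENNReal.toReal_mono hpt hp
      rw [div_le_one (by linarith)]; exact this
  calc _ ≤ eLpNorm G p (volume.restrict (Set.Ioc (x0 - r) (x0 + r))) * 1 := by
        gcongr
        exact ENNReal.rpow_le_one hm hexp
    _ ≤ _ := by rw [mul_one]; exact eLpNorm_mono_measure _ Measure.restrict_le_self

/-- The half sum of the two translates of the bump. -/
noncomputable def auxW (g : ℝ → ℂ) (lam ξ : ℝ) : ℂ := 1/2 * (g (ξ - lam) + g (ξ + lam))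

lemma auxW_int (g : ℝ → ℂ) (hg : Integrable g) (lam : ℝ) : Integrable (auxW g lam) :=
  ((hg.comp_sub_right lam).add (hg.comp_add_right lam)).const_mul _

lemma auxW_norm (g : ℝ → ℂ) (hg : Integrable g) (lam : ℝ) :
    ∫ ξ, ‖auxW g lam ξ‖ ≤ ∫ ξ, ‖g ξ‖ := by
  have i1 := (hg.comp_sub_right lam).norm
  have i2 := (hg.comp_add_right lam).norm
  have s1 := integral_sub_right_eq_self (μ := volume) (fun ξ : ℝ => ‖g ξ‖) lam
  have s2 := integral_add_right_eq_self (μ := volume) (fun ξ : ℝ => ‖g ξ‖) lam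
  calc ∫ ξ, ‖auxW g lam ξ‖ ≤ ∫ ξ, (1/2 * (‖g (ξ - lam)‖ + ‖g (ξ + lam)‖)) := by
        apply integral_mono (auxW_int g hg lam).norm ((i1.add i2).const_mul _)
        intro ξ
        simp only [auxW, norm_mul]
        have : ‖(1/2 : ℂ)‖ = 1/2 := by norm_num
        rw [this]
        gcongr
        exact norm_add_le _ _
    _ = ∫ ξ, ‖g ξ‖ := by
        rw [integral_const_mul, integral_add i1 i2, s1, s2]; ring

lemma auxW_zero (g : ℝ → ℂ) (hsupp : ∀ ξ : ℝ, 1/2 ≤ |ξ| → g ξ = 0) (lam ξ : ℝ) (hl : 0 < lam)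
    (h : ¬ |(|ξ| - lam)| ≤ 1/2) : auxW g lam ξ = 0 := by
  have h1 := abs_abs_sub_abs_le ξ lam
  have h2 := abs_abs_sub_abs_le ξ (-lam)
  rw [abs_neg, sub_neg_eq_add] at h2
  rw [abs_of_pos hl] at h1 h2
  rw [auxW, hsupp _ (by linarith), hsupp _ (by linarith)]
  simp

lemma aux_block (ϑ : ℝ → ℝ)
    (hϑone : ∀ ξ : ℝ, |ξ| ≤ 3/4 → ϑ ξ = 1)
    (hϑzero : ∀ ξ : ℝ, 4/3 ≤ |ξ| → ϑ ξ = 0)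
    (g : ℝ → ℂ) (hg : Integrable g) (hsupp : ∀ ξ : ℝ, 1/2 ≤ |ξ| → g ξ = 0)
    (φ : ℝ → ℂ) (hφcont : Continuous φ) (hφint : Integrable φ)
    (hφ : ∀ ξ : ℝ, fourierT1 φ ξ = g ξ) (a : ℂ) (n : ℕ) (hn : 3 ≤ n) (t : ℝ) (ht : 0 < t)
    (f : ℝ → ℂ) (hf : f = fun x : ℝ => a * φ x * Complex.cos ((((17:ℝ)/12) * 2^n : ℝ) * x)) :
    ∃ G : ℝ → ℂ, Continuous G ∧
      (∀ x, lpBlock1 ϑ (n:ℤ) (fun x => heatSemigroup1 ((2:ℝ)^(-(2*(n:ℤ))) * t) f x - f x) x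
        = a * G x) ∧
      ∀ x : ℝ, ‖G x + ((t * (17/12)^2 : ℝ) : ℂ) *
          (φ x * Complex.cos ((((17:ℝ)/12) * 2^n : ℝ) * x))‖
        ≤ ((2 * Real.pi)⁻¹ * ∫ ξ, ‖g ξ‖) * (2 * t * ((2:ℝ)^n)⁻¹ + 8 * t^2) := by
  set lam : ℝ := ((17:ℝ)/12) * 2^n with hlam
  set q : ℝ := ((2:ℝ)^n)⁻¹ with hq
  have hq0 : 0 < q := by positivity
  have hq8 : q ≤ 1/8 := by
    rw [hq]
    have : (2:ℝ)^3 ≤ 2^n := pow_le_pow_right₀ (by norm_num) hn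
    rw [inv_le_comm₀ (by positivity) (by norm_num)]; norm_num at this ⊢; exact this
  have hlam0 : 0 < lam := by positivity
  have hqlam : q * lam = 17/12 := by rw [hq, hlam]; field_simp
  have hε : (2:ℝ)^(-(2*(n:ℤ))) = q^2 := by
    rw [hq, zpow_neg, mul_comm, zpow_mul, inv_pow, zpow_natCast]; rfl
  rw [hε]
  have hτ : 0 < q^2 * t := by positivity
  have hfint : Integrable f := by rw [hf]; exact aux_mod_int φ hφint a lam
  obtain ⟨hui, huf⟩ := aux_heat (q^2 * t) hτ f hfint
  have hWi := auxW_int g hg lam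
  -- frequency localisation
  have hloc : ∀ ξ : ℝ, |(|ξ| - lam)| ≤ 1/2 → |(|q * ξ| - 17/12)| ≤ q/2 := by
    intro ξ h
    rw [abs_mul, abs_of_pos hq0, ← hqlam, ← mul_sub, abs_mul, abs_of_pos hq0]
    nlinarith
  have hft : ∀ ξ, fourierT1 (fun x => heatSemigroup1 (q^2 * t) f x - f x) ξ
      = a * (((Real.exp (-(t * (q * ξ)^2)) - 1 : ℝ) : ℂ) * auxW g lam ξ) := by
    intro ξ
    have h1 : fourierT1 (fun x => heatSemigroup1 (q^2 * t) f x - f x) ξ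
        = fourierT1 (heatSemigroup1 (q^2 * t) f) ξ - fourierT1 f ξ := by
      unfold fourierT1
      rw [← integral_sub (aux_int_exp hui ξ) (aux_int_exp hfint ξ)]
      congr 1; funext x; ring
    have h2 : fourierT1 f ξ = a * auxW g lam ξ := by
      rw [hf, aux_mod_ft φ hφint a lam ξ, hφ, hφ]; rfl
    rw [h1, huf, h2]
    push_cast
    rw [show -(((q:ℂ)^2 * t) * (ξ:ℂ)^2) = -(t * (q * ξ)^2) by ring]
    ring
  set F : ℝ → ℂ := fun ξ => ((Real.exp (-(t * (q * ξ)^2)) - 1 : ℝ) : ℂ) * auxW g lam ξ with hF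
  have hFi : Integrable F := by
    refine hWi.bdd_mul (c := 1) ?_ (Filter.Eventually.of_forall fun ξ => ?_)
    · exact (by fun_prop : Continuous fun ξ : ℝ =>
        ((Real.exp (-(t * (q * ξ)^2)) - 1 : ℝ) : ℂ)).aestronglyMeasurable
    · rw [Complex.norm_real, Real.norm_eq_abs, abs_le]
      have := Real.exp_pos (-(t * (q * ξ)^2))
      have h2 : Real.exp (-(t * (q * ξ)^2)) ≤ 1 := by
        rw [Real.exp_le_one_iff]
        have : 0 ≤ t * (q * ξ)^2 := by positivity
        linarith
      constructor <;> linarith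
  refine ⟨invFourierT1 F, aux_inv_cont F hFi, ?_, ?_⟩
  · intro x
    have hn1 : ¬ ((n:ℤ) = -1) := by omega
    rw [lpBlock1]
    unfold invFourierT1
    rw [mul_left_comm a, ← integral_const_mul a]
    congr 2
    funext ξ
    simp only []
    rw [hft, if_neg hn1]
    have hqz : (2:ℝ)^(-(n:ℤ)) = q := by rw [hq, zpow_neg, zpow_natCast]
    rw [hqz]
    by_cases h : |(|ξ| - lam)| ≤ 1/2
    · rw [aux_cutoff ϑ hϑone hϑzero (q * ξ) ((hloc ξ h).trans (by linarith))]
      simp only [hF, Complex.ofReal_one]; ring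
    · simp only [hF, auxW_zero g hsupp lam ξ hlam0 h]; ring
  · intro x
    have hinv := aux_mod_inv φ g hg x lam (aux_inversion φ hφcont hφint g hg hφ x)
    rw [← hinv]
    have hsum : invFourierT1 F x + ((t * (17/12)^2 : ℝ) : ℂ) *
        invFourierT1 (fun ξ => 1/2 * (g (ξ - lam) + g (ξ + lam))) x
        = invFourierT1 (fun ξ => F ξ + ((t * (17/12)^2 : ℝ) : ℂ) * auxW g lam ξ) x := by
      have hadd := integral_add (aux_int_exp' hFi x)
        (aux_int_exp' (hWi.const_mul ((t * (17/12)^2 : ℝ) : ℂ)) x)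
      unfold invFourierT1
      rw [mul_left_comm, ← mul_add, ← integral_const_mul]
      congr 1
      simp_rw [mul_add (Complex.exp _)]
      rw [hadd]
      congr 1
      congr 1
      funext ξ
      simp only [auxW]; ring
    rw [hsum]
    refine (aux_inv_norm _ x).trans ?_
    rw [mul_assoc]
    gcongr
    have hδ : 0 ≤ 2 * t * q + 8 * t^2 := by positivity
    calc ∫ ξ, ‖F ξ + ((t * (17/12)^2 : ℝ) : ℂ) * auxW g lam ξ‖
        ≤ ∫ ξ, (2 * t * q + 8 * t^2) * ‖auxW g lam ξ‖ := by
          apply integral_mono (hFi.add (hWi.const_mul _)).norm (hWi.norm.const_mul _)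
          intro ξ
          by_cases h : |(|ξ| - lam)| ≤ 1/2
          · have hs := aux_symbol t q (q * ξ) ht hq0 hq8 (hloc ξ h)
            simp only [hF, Pi.add_apply]
            rw [← add_mul, ← Complex.ofReal_add, norm_mul, Complex.norm_real, Real.norm_eq_abs]
            gcongr
          · simp [hF, auxW_zero g hsupp lam ξ hlam0 h]
      _ ≤ _ := by
          rw [integral_const_mul, mul_comm]
          exact mul_le_mul_of_nonneg_right (auxW_norm g hg lam) hδ

lemma aux_nonzero (φ : ℝ → ℂ) (hφcont : Continuous φ) (h : ∃ x, φ x ≠ 0) :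
    ∃ c0 x0 r : ℝ, 0 < c0 ∧ 0 < r ∧ r ≤ 1/2 ∧
      ∀ x ∈ Set.Icc (x0 - r) (x0 + r), c0 ≤ ‖φ x‖ := by
  obtain ⟨x0, hx0⟩ := h
  have hpos : 0 < ‖φ x0‖ := norm_pos_iff.mpr hx0
  have hev : ∀ᶠ x in nhds x0, ‖φ x0‖ / 2 < ‖φ x‖ :=
    hφcont.norm.continuousAt.eventually (lt_mem_nhds (by linarith))
  obtain ⟨ε, hε, hball⟩ := Metric.eventually_nhds_iff.mp hev
  refine ⟨‖φ x0‖ / 2, x0, min (ε/2) (1/2), by linarith, by positivity, min_le_right _ _, ?_⟩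
  intro x hx
  refine (hball ?_).le
  rw [Real.dist_eq, abs_lt]
  have := min_le_left (ε/2) (1/2)
  constructor <;> linarith [hx.1, hx.2]

/-- 1-D toy model.  With viscosity `ε_n = 2^{-2n}` and initial data
`u₀(x) = 2^{-ns} φ(x) cos((17/12)2^n x)` (`φ` a Schwartz bump with `supp φ̂ ⊆ {|ξ| ≤ 1/2}`,
`φ̂ = 1` near `0`), the solution `u^{ε_n}(t) = e^{ε_n t ∂²ₓₓ}u₀` satisfies
`2^{ns}‖Δ_n(u^{ε_n}(t) − u₀)‖_{L^p} ≥ c₁ t − C₁ t²` with `c₁, C₁` independent of `n`;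
hence `u^{ε_n}(t) − u₀` does not converge to `0` in `B^s_{p,∞}(ℝ)` as `n → ∞` for fixed
small `t` with `c₁t − C₁t² > 0`. -/
theorem toy_model_heat_nonconvergence
    (ϑ : ℝ → ℝ) (hϑsmooth : ContDiff ℝ (⊤ : ℕ∞) ϑ)
    (hϑeven : ∀ ξ, ϑ (-ξ) = ϑ ξ)
    (hϑone : ∀ ξ : ℝ, |ξ| ≤ 3/4 → ϑ ξ = 1)
    (hϑzero : ∀ ξ : ℝ, 4/3 ≤ |ξ| → ϑ ξ = 0)
    (φhat : ℝ → ℝ) (hsmooth : ContDiff ℝ (⊤ : ℕ∞) φhat) (hcs : HasCompactSupport φhat)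
    (hsupp : ∀ ξ : ℝ, 1/2 ≤ |ξ| → φhat ξ = 0)
    (hone : ∃ ρ : ℝ, 0 < ρ ∧ ∀ ξ : ℝ, |ξ| ≤ ρ → φhat ξ = 1)
    (φ : ℝ → ℂ) (hφcont : Continuous φ) (hφint : Integrable φ)
    (hφ : ∀ ξ : ℝ, fourierT1 φ ξ = (φhat ξ : ℂ))
    (s : ℝ) (p : ENNReal) (hp : 1 ≤ p)
    (u₀ : ℕ → ℝ → ℂ)
    (hu₀ : u₀ = fun (n : ℕ) (x : ℝ) => ((((2:ℝ)^(-(n:ℝ)*s) : ℝ)) : ℂ) * φ x *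
      Complex.cos ((((17:ℝ)/12) * 2^n : ℝ) * x))
    (u : ℕ → ℝ → ℝ → ℂ)
    (hu : u = fun (n : ℕ) (t : ℝ) => heatSemigroup1 ((2:ℝ)^(-(2*(n:ℤ))) * t) (u₀ n)) :
    ∃ c₁ C₁ : ℝ, 0 < c₁ ∧ 0 < C₁ ∧
      (∃ N : ℕ, ∀ n : ℕ, N ≤ n → ∀ t : ℝ, 0 < t →
        ENNReal.ofReal (c₁ * t - C₁ * t^2) ≤
          ENNReal.ofReal ((2:ℝ)^((n:ℝ)*s)) *
            eLpNorm (lpBlock1 ϑ (n:ℤ) (fun x => u n t x - u₀ n x)) p volume) ∧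
      (∀ t : ℝ, 0 < t → 0 < c₁ * t - C₁ * t^2 →
        ¬ Tendsto (fun n : ℕ =>
            ENNReal.ofReal ((2:ℝ)^((n:ℝ)*s)) *
              eLpNorm (lpBlock1 ϑ (n:ℤ) (fun x => u n t x - u₀ n x)) p volume)
          atTop (nhds 0)) := by
  set g : ℝ → ℂ := fun ξ => (φhat ξ : ℂ) with hgdef
  have hg : Integrable g := (hsmooth.continuous.integrable_of_hasCompactSupport hcs).ofReal
  have hgs : ∀ ξ : ℝ, 1/2 ≤ |ξ| → g ξ = 0 := by
    intro ξ h; simp [hgdef, hsupp ξ h]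
  have hne : ∃ x, φ x ≠ 0 := by
    by_contra hcon
    push Not at hcon
    obtain ⟨ρ, hρ, h1⟩ := hone
    have h2 := hφ 0
    rw [h1 0 (by simpa using hρ.le)] at h2
    simp [fourierT1, hcon] at h2
  obtain ⟨c0, x0, r, hc0, hr, hr2, hlow⟩ := aux_nonzero φ hφcont hne
  set M : ℝ := (2 * Real.pi)⁻¹ * (∫ ξ, ‖g ξ‖) + 1 with hM
  have hM0 : 0 < M := by
    have : 0 ≤ ∫ ξ, ‖g ξ‖ := integral_nonneg fun _ => norm_nonneg _
    positivity
  have hpow : Tendsto (fun n : ℕ => ((2:ℝ)^n)⁻¹) atTop (nhds 0) :=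
    tendsto_inv_atTop_zero.comp (tendsto_pow_atTop_atTop_of_one_lt (by norm_num))
  have hev1 : ∀ᶠ n : ℕ in atTop, ((2:ℝ)^n)⁻¹ < r/2 := hpow.eventually (gt_mem_nhds (by positivity))
  have hev2 : ∀ᶠ n : ℕ in atTop, ((2:ℝ)^n)⁻¹ < (17/12)^2 * c0 * r / (8 * M) :=
    hpow.eventually (gt_mem_nhds (by positivity))
  obtain ⟨N, hN⟩ := eventually_atTop.mp (hev1.and (hev2.and (eventually_ge_atTop 3)))
  have main : ∀ n : ℕ, N ≤ n → ∀ t : ℝ, 0 < t →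
        ENNReal.ofReal ((17/12)^2 * c0 * r / 4 * t - 8 * M * t^2) ≤
          ENNReal.ofReal ((2:ℝ)^((n:ℝ)*s)) *
            eLpNorm (lpBlock1 ϑ (n:ℤ) (fun x => u n t x - u₀ n x)) p volume := by
    intro n hn t ht
    obtain ⟨hq1, hq2, hn3⟩ := hN n hn
    obtain ⟨G, hGc, hGeq, hGest⟩ := aux_block ϑ hϑone hϑzero g hg hgs φ hφcont hφint hφ
      ((((2:ℝ)^(-(n:ℝ)*s) : ℝ)) : ℂ) n hn3 t ht (u₀ n) (by rw [hu₀])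
    have hfun : lpBlock1 ϑ (n:ℤ) (fun x => u n t x - u₀ n x)
        = ((((2:ℝ)^(-(n:ℝ)*s) : ℝ)) : ℂ) • G := by
      funext x
      rw [Pi.smul_apply, smul_eq_mul, ← hGeq x, hu]
    rw [hfun, eLpNorm_const_smul, ← mul_assoc]
    have hone' : ENNReal.ofReal ((2:ℝ)^((n:ℝ)*s)) * ‖((((2:ℝ)^(-(n:ℝ)*s) : ℝ)) : ℂ)‖ₑ = 1 := by
      rw [← ofReal_norm_eq_enorm, Complex.norm_real, Real.norm_of_nonneg (by positivity),
        ← ENNReal.ofReal_mul (by positivity), ← Real.rpow_add (by norm_num)]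
      simp
    rw [hone', one_mul]
    set q : ℝ := ((2:ℝ)^n)⁻¹ with hq
    set lam : ℝ := ((17:ℝ)/12) * 2^n with hlam
    have hq0 : 0 < q := by positivity
    have hlam0 : 0 < lam := by positivity
    have hlamq : 1 / lam ≤ q := by
      rw [hq, one_div]
      apply inv_anti₀ (by positivity)
      have : (0:ℝ) < 2^n := by positivity
      linarith
    have hδ : 0 ≤ 2 * t * q + 8 * t^2 := by positivity
    have hL := aux_lower G hGc p hp ((17/12)^2 * c0 * t) (M * (2 * t * q + 8 * t^2)) lam x0 r
      (by positivity) hlam0 hr hr2 (by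
        intro x hx
        have h1 := hGest x
        have h2 : ‖((t * (17/12)^2 : ℝ) : ℂ) * (φ x * Complex.cos ((lam:ℂ) * x))‖
            = t * (17/12)^2 * (‖φ x‖ * |Real.cos (lam * x)|) := by
          rw [norm_mul, norm_mul, Complex.norm_real, Real.norm_of_nonneg (by positivity),
            ← Complex.ofReal_mul, ← Complex.ofReal_cos, Complex.norm_real, Real.norm_eq_abs]
        have h3 := norm_sub_le (G x + ((t * (17/12)^2 : ℝ) : ℂ) *
          (φ x * Complex.cos ((lam:ℂ) * x))) (G x)
        rw [add_sub_cancel_left, h2] at h3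
        have h4 : c0 * Real.cos (lam * x)^2 ≤ ‖φ x‖ * |Real.cos (lam * x)| := by
          have h5 := hlow x hx
          have h6 := Real.abs_cos_le_one (lam * x)
          have h7 := abs_nonneg (Real.cos (lam * x))
          rw [← sq_abs (Real.cos (lam * x))]
          apply mul_le_mul h5 _ (by positivity) (by positivity)
          nlinarith
        have h8 : t * (17/12)^2 * (c0 * Real.cos (lam * x)^2)
          ≤ t * (17/12)^2 * (‖φ x‖ * |Real.cos (lam * x)|) := by gcongr
        have h9 : M * (2 * t * q + 8 * t^2) = ((2 * Real.pi)⁻¹ * ∫ ξ, ‖g ξ‖) *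
          (2 * t * q + 8 * t^2) + (2 * t * q + 8 * t^2) := by rw [hM]; ring
        linarith)
    refine le_trans (ENNReal.ofReal_le_ofReal ?_) hL
    rw [lt_div_iff₀ (by positivity)] at hq2
    have a1 : (17/12)^2 * c0 * t * (r/2) ≤ (17/12)^2 * c0 * t * (r - 1/lam) := by
      gcongr; linarith
    have a2 : 2 * r * (M * (2 * t * q + 8 * t^2)) ≤ 1 * (M * (2 * t * q + 8 * t^2)) := by
      gcongr; linarith
    have a3 : t * (q * (8 * M)) ≤ t * ((17/12)^2 * c0 * r) := by gcongr
    linarith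
  refine ⟨(17/12)^2 * c0 * r / 4, 8 * M, by positivity, by positivity, ⟨N, main⟩, ?_⟩
  intro t ht hpos hT
  have hle := ge_of_tendsto hT (eventually_atTop.mpr ⟨N, fun n hn => main n hn t ht⟩)
  rw [nonpos_iff_eq_zero, ENNReal.ofReal_eq_zero] at hle
  linarith
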